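/- Every finitely generated, residually finite torsion group G embeds into a finitely generated, perfect, infinite, residually finite torsion group Γ; that is, there exists such a group Γ together with an injective group homomorphism G → Γ. (Part (1) of Theorem 1.1, stated without the branch-group conclusion.) -/

import Mathlib

/-- A group `G` is residually finite if every non-identity element avoids some
finite-index normal subgroup. -/
def ResiduallyFinite (G : Type*) [Group G] : Prop :=
  ∀ g : G, g ≠ 1 → ∃ N : Subgroup G, N.Normal ∧ N.FiniteIndex ∧ g ∉ N

/-!
Let `T` be the Grigorchuk group, an infinite finitely generated residually finite torsion group,
and put `H = G × T`. In the wreath product of `H` with the alternating group on `n` points, consider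
the kernel `Γ` of `(f, a) ↦ ∏ x, f x` with values in the abelianization of `H`, which is finite. So
`Γ` has finite index and inherits finite generation, residual finiteness and torsion. When the order
of the abelianization divides `n`, the diagonal embeds `H` into `Γ`.

For perfectness, let `n ≥ 5`. The alternating group is perfect and 2-transitive, so `⁅Γ, Γ⁆`
contains it, and also contains every function with value `h` at `y`, value `h⁻¹` at `z` and `1`
elsewhere. Up to these, an element of `Γ` is a function supported at a single point, where its
value lies in `⁅H, H⁆`; and a function supported at `y` with value `⁅h, k⁆` is the commutator of
two functions with supports `{y, x}` and `{y, z}`.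

That `T` is torsion is proved by induction on the length of words. A word `a x₁ a x₂ ⋯ a xₙ` with
`n` even acts on the two subtrees by words of half the length. For `n` odd its square acts on them
by words of length `n`, in which every `x` among the `xᵢ` occurs once as its successor in the
cycle `b ↦ c ↦ d ↦ b` and once as the power of `a` by which it acts on the other subtree. For
`x = d` this power is trivial and the word can be shortened, so that at most three such steps
suffice.
-/

/-! ### Residual finiteness and torsion -/

theorem residuallyFinite_iff_group_residuallyFinite {G : Type*} [Group G] :
    ResiduallyFinite G ↔ Group.ResiduallyFinite G := by
  rw [Group.residuallyFinite_iff_exists_finiteIndexNormalSubgroup]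
  exact forall₂_congr fun _ _ =>
    ⟨fun ⟨N, _, _, hg⟩ => ⟨.ofSubgroup N, hg⟩,
      fun ⟨N, hg⟩ => ⟨N, inferInstance, inferInstance, hg⟩⟩

theorem residuallyFinite_pi {ι : Type*} {M : ι → Type*} [∀ i, Group (M i)]
    [∀ i, Group.ResiduallyFinite (M i)] : Group.ResiduallyFinite (∀ i, M i) := by
  rw [Group.residuallyFinite_iff_forall_finiteIndexNormalSubgroup]
  exact fun g hg => funext fun i =>
    Group.eq_one_iff_forall_finiteIndexNormalSubroup (g i) fun K =>
      hg (K.comap (Pi.evalMonoidHom M i))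

theorem residuallyFinite_of_finiteIndex_range {G N : Type*} [Group G] [Group N]
    [Group.ResiduallyFinite N] {f : N →* G} (hf : Function.Injective f)
    [hfin : f.range.FiniteIndex] : Group.ResiduallyFinite G := by
  rw [Group.residuallyFinite_iff_exists_finiteIndex]
  intro g hg
  by_cases hgf : g ∈ f.range
  · obtain ⟨n, rfl⟩ := hgf
    obtain ⟨K, hK, hnK⟩ := Group.residuallyFinite_iff_exists_finiteIndex.1 ‹_› n
      (ne_of_apply_ne f (by rwa [map_one]))
    refine ⟨K.map f, ⟨?_⟩, by rwa [Subgroup.mem_map_iff_mem hf]⟩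
    rw [Subgroup.index_map_of_injective K hf]
    exact mul_ne_zero hK.index_ne_zero hfin.index_ne_zero
  · exact ⟨f.range, hfin, hgf⟩

theorem residuallyFinite_of_finite_orbits {G X : Type*} [Group G] [MulAction G X]
    [FaithfulSMul G X] (h : ∀ x : X, (MulAction.orbit G x).Finite) : Group.ResiduallyFinite G := by
  rw [Group.residuallyFinite_iff_exists_finiteIndex]
  intro g hg
  obtain ⟨x, hx⟩ : ∃ x : X, g • x ≠ x := by
    contrapose! hg
    exact FaithfulSMul.eq_of_smul_eq_smul fun x => by rw [hg, one_smul]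
  refine ⟨MulAction.stabilizer G x, ⟨?_⟩, hx⟩
  rw [MulAction.index_stabilizer]
  exact (Set.ncard_pos (h x)).2 (MulAction.nonempty_orbit x) |>.ne'

theorem isOfFinOrder_pi {ι : Type*} [Finite ι] {M : ι → Type*} [∀ i, Monoid (M i)]
    {f : ∀ i, M i} (hf : ∀ i, IsOfFinOrder (f i)) : IsOfFinOrder f := by
  have := Fintype.ofFinite ι
  refine isOfFinOrder_iff_pow_eq_one.2
    ⟨∏ i, orderOf (f i), Finset.prod_pos fun i _ => (hf i).orderOf_pos, funext fun i => ?_⟩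
  exact orderOf_dvd_iff_pow_eq_one.1 (Finset.dvd_prod_of_mem _ (Finset.mem_univ i))

theorem finite_abelianization_of_fg_of_isMulTorsion {G : Type*} [Group G] [Group.FG G]
    (hG : IsMulTorsion G) : Finite (Abelianization G) :=
  have : Group.FG (Abelianization G) := QuotientGroup.fg _
  CommGroup.finite_of_fg_isMulTorsion _ <|
    hG.of_surjective (QuotientGroup.mk'_surjective (commutator G))

theorem commutator_eq_top_of_le {G : Type*} [Group G] {K : Subgroup G} (h : K ≤ ⁅K, K⁆) :
    commutator K = ⊤ := by
  rw [eq_top_iff, ← Subgroup.map_subtype_le_map_subtype, K.map_subtype_commutator]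
  rwa [← MonoidHom.range_eq_map, K.range_subtype]

/-! ### Permutational wreath products -/

theorem exists_ne_and_ne_of_two_lt_card {X : Type*} [Fintype X] (hX : 2 < Fintype.card X)
    (y z : X) : ∃ x, x ≠ y ∧ x ≠ z := by
  classical
  obtain ⟨x, -, hx⟩ := Finset.exists_mem_notMem_of_card_lt_card
    (s := {y, z}) (t := Finset.univ) (Finset.card_le_two.trans_lt hX)
  exact ⟨x, by simpa using hx⟩

theorem mulAutArrow_apply_apply_apply {H A X : Type*} [Group H] [Group A] [MulAction A X] (a : A)
    (f : X → H) (x : X) : mulAutArrow a f x = f (a⁻¹ • x) :=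
  rfl

/-- The permutational wreath product of `H` with a group `A` acting on `X`: the semidirect product
of `X → H` with `A`, where `(a • f) x = f (a⁻¹ • x)`. All functions are allowed, not only the
finitely supported ones, so this is the usual notion for finite `X`. -/
abbrev PermWreath (H A X : Type*) [Group H] [Group A] [MulAction A X] : Type _ :=
  (X → H) ⋊[mulAutArrow (G := A) (A := X) (M := H)] A

namespace PermWreath

open SemidirectProduct commutatorElement

variable {H A X : Type*} [Group H] [Group A] [MulAction A X]

theorem fg [Group.FG H] [Group.FG A] [Finite X] : Group.FG (PermWreath H A X) := by
  have hgen : (inl : _ →* PermWreath H A X).range ⊔ (inr : _ →* PermWreath H A X).range = ⊤ := by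
    refine eq_top_iff.2 fun w _ => ?_
    rw [← inl_left_mul_inr_right w]
    exact Subgroup.mul_mem_sup ⟨_, rfl⟩ ⟨_, rfl⟩
  refine ⟨hgen ▸ Subgroup.FG.sup ?_ ?_⟩ <;>
    exact (Group.fg_iff_subgroup_fg _).1 (Group.fg_range _)

theorem residuallyFinite [Group.ResiduallyFinite H] [Finite A] :
    Group.ResiduallyFinite (PermWreath H A X) := by
  have : Group.ResiduallyFinite (X → H) := residuallyFinite_pi
  have : (inl : _ →* PermWreath H A X).range.FiniteIndex := by
    rw [range_inl_eq_ker_rightHom]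
    exact Subgroup.finiteIndex_ker _
  exact residuallyFinite_of_finiteIndex_range
    (f := (inl : (X → H) →* PermWreath H A X)) inl_injective

theorem isMulTorsion [Finite X] (hH : IsMulTorsion H) (hA : IsMulTorsion A) :
    IsMulTorsion (PermWreath H A X) := by
  refine IsMulTorsion.extension_closed range_inl_eq_ker_rightHom hA ?_
  exact IsMulTorsion.of_surjective (MonoidHom.rangeRestrict_surjective _)
    fun f => isOfFinOrder_pi fun x => hH (f x)

theorem inr_mul_inl_mulSingle_mul_inv [DecidableEq X] (a : A) (x : X) (h : H) :
    inr a * inl (Pi.mulSingle x h) * (inr a)⁻¹ =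
      (inl (Pi.mulSingle (a • x) h) : PermWreath H A X) := by
  rw [← map_inv, ← inl_aut]
  congr 1
  funext y
  simp only [mulAutArrow_apply_apply_apply, Pi.mulSingle_apply, inv_smul_eq_iff]

variable [Fintype X]

variable (H A X) in
/-- The homomorphism `(f, a) ↦ ∏ x, f x` from the wreath product to the abelianization of `H`. -/
def augmentation : PermWreath H A X →* Abelianization H :=
  lift (∏ x, Abelianization.of.comp (Pi.evalMonoidHom (fun _ => H) x)) 1 fun a =>
    MonoidHom.ext fun f => by
      simpa [mulAutArrow_apply_apply_apply, -mulAutArrow_apply_apply] using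
        Equiv.prod_comp (MulAction.toPerm a⁻¹ : Equiv.Perm X) fun x => Abelianization.of (f x)

@[simp]
theorem augmentation_inl (f : X → H) :
    augmentation H A X (inl f) = ∏ x, Abelianization.of (f x) := by
  simp [augmentation]

@[simp]
theorem augmentation_inr (a : A) : augmentation H A X (inr a) = 1 := by
  simp [augmentation]

variable (H A X) in
/-- The kernel of the augmentation, which is the perfect group of the construction. -/
abbrev augKer : Subgroup (PermWreath H A X) :=
  (augmentation H A X).ker

theorem fg_augKer [Group.FG H] [Group.FG A] [Finite (Abelianization H)] :
    Group.FG (augKer H A X) :=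
  have : Group.FG (PermWreath H A X) := fg
  have : (augKer H A X).FiniteIndex := Subgroup.finiteIndex_ker _
  inferInstance

theorem inr_mem_augKer (a : A) : inr a ∈ augKer H A X :=
  augmentation_inr a

@[simp]
theorem augmentation_inl_mulSingle [DecidableEq X] (x : X) (h : H) :
    augmentation H A X (inl (Pi.mulSingle x h)) = Abelianization.of h := by
  rw [augmentation_inl, Fintype.prod_eq_single x fun y hy => by
    rw [Pi.mulSingle_eq_of_ne hy, map_one], Pi.mulSingle_eq_same]

theorem inl_mulSingle_mul_mulSingle_inv_mem_augKer [DecidableEq X] (x y : X) (h : H) :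
    inl (Pi.mulSingle x h * Pi.mulSingle y h⁻¹) ∈ augKer H A X := by
  rw [MonoidHom.mem_ker, map_mul, map_mul, augmentation_inl_mulSingle, augmentation_inl_mulSingle,
    ← map_mul, mul_inv_cancel, map_one]

theorem inr_mem_commutator_augKer (hA : commutator A = ⊤) (a : A) :
    inr a ∈ ⁅augKer H A X, augKer H A X⁆ := by
  have hle : (inr : A →* PermWreath H A X).range ≤ augKer H A X :=
    Set.range_subset_iff.2 inr_mem_augKer
  have ha : inr a ∈ (commutator A).map (inr : A →* PermWreath H A X) :=
    Subgroup.mem_map_of_mem _ (hA ▸ Subgroup.mem_top a)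
  rw [map_commutator_eq] at ha
  exact Subgroup.commutator_mono hle hle ha

theorem inl_mulSingle_mul_mulSingle_inv_mem_commutator_augKer [DecidableEq X]
    [MulAction.IsMultiplyPretransitive A X 2] (hX : 2 < Fintype.card X) (y z : X) (h : H) :
    inl (Pi.mulSingle y h * Pi.mulSingle z h⁻¹) ∈ ⁅augKer H A X, augKer H A X⁆ := by
  obtain ⟨x, hxy, hxz⟩ := exists_ne_and_ne_of_two_lt_card hX y z
  obtain ⟨a, hax, hay⟩ := MulAction.is_two_pretransitive_iff.1 ‹_› hxy hxz
  convert Subgroup.commutator_mem_commutator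
    (inl_mulSingle_mul_mulSingle_inv_mem_augKer y x h)
    (inr_mem_augKer (H := H) a) using 1
  have hconj : inr a * (inl (Pi.mulSingle y h * Pi.mulSingle x h⁻¹))⁻¹ * (inr a)⁻¹ =
      (inl (Pi.mulSingle x h * Pi.mulSingle z h⁻¹) : PermWreath H A X) := by
    rw [← map_inv, mul_inv_rev, ← Pi.mulSingle_inv, ← Pi.mulSingle_inv, inv_inv, map_mul,
      ← conj_mul, inr_mul_inl_mulSingle_mul_inv, inr_mul_inl_mulSingle_mul_inv, hax, hay, map_mul]
  rw [commutatorElement_def, mul_assoc, mul_assoc, ← mul_assoc (inr a), hconj, ← map_mul,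
    ← mul_assoc, Pi.mulSingle_inv x, inv_mul_cancel_right]

theorem inl_mulSingle_commutatorElement_mem_commutator_augKer [DecidableEq X]
    (hX : 2 < Fintype.card X) (y : X) (h k : H) :
    inl (Pi.mulSingle y ⁅h, k⁆) ∈ ⁅augKer H A X, augKer H A X⁆ := by
  obtain ⟨x, hxy, -⟩ := exists_ne_and_ne_of_two_lt_card hX y y
  obtain ⟨z, hzx, hzy⟩ := exists_ne_and_ne_of_two_lt_card hX x y
  convert Subgroup.commutator_mem_commutator (inl_mulSingle_mul_mulSingle_inv_mem_augKer y x h)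
    (inl_mulSingle_mul_mulSingle_inv_mem_augKer y z k) using 1
  rw [← map_commutatorElement]
  congr 1
  funext w
  rcases eq_or_ne w y with rfl | hwy
  · simp [commutatorElement_def, hxy.symm, hzy.symm]
  rcases eq_or_ne w x with rfl | hwx <;> simp [commutatorElement_def, *]

theorem inl_mulSingle_mem_commutator_augKer [DecidableEq X] (hX : 2 < Fintype.card X)
    (y : X) {c : H} (hc : c ∈ commutator H) :
    inl (Pi.mulSingle y c) ∈ ⁅augKer H A X, augKer H A X⁆ := by
  have hle : commutator H ≤ (⁅augKer H A X, augKer H A X⁆).comap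
      (inl.comp (MonoidHom.mulSingle (fun _ : X => H) y)) :=
    Subgroup.commutator_le.2 fun h _ k _ =>
      inl_mulSingle_commutatorElement_mem_commutator_augKer hX y h k
  exact hle hc

theorem inl_mem_commutator_augKer [MulAction.IsMultiplyPretransitive A X 2]
    (hX : 2 < Fintype.card X) {f : X → H} (hf : inl f ∈ augKer H A X) :
    inl f ∈ ⁅augKer H A X, augKer H A X⁆ := by
  classical
  have : Nonempty X := Fintype.card_pos_iff.1 (by lia)
  let y : X := Classical.arbitrary X
  let D := (⁅augKer H A X, augKer H A X⁆).comap inl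
  have hsup : f ∈ D ⊔ (MonoidHom.mulSingle (fun _ : X => H) y).range :=
    Subgroup.pi_mem_of_mulSingle_mem f fun x => by
      have hx : (Pi.mulSingle x (f x) * Pi.mulSingle y (f x)⁻¹ : X → H) ∈ D :=
        inl_mulSingle_mul_mulSingle_inv_mem_commutator_augKer hX x y (f x)
      have hy : Pi.mulSingle y (f x) ∈ (MonoidHom.mulSingle (fun _ : X => H) y).range :=
        ⟨f x, rfl⟩
      simpa only [Pi.mulSingle_inv, inv_mul_cancel_right] using Subgroup.mul_mem_sup hx hy
  obtain ⟨d, hd, _, ⟨h, rfl⟩, rfl⟩ := Subgroup.mem_sup_of_normal_left.1 hsup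
  refine mul_mem hd (inl_mulSingle_mem_commutator_augKer hX y ?_)
  have hdker : augmentation H A X (inl d) = 1 := Subgroup.commutator_le_left _ _ hd
  rw [MonoidHom.mem_ker, map_mul, map_mul, hdker, one_mul] at hf
  rw [← Abelianization.ker_of]
  exact (augmentation_inl_mulSingle y h).symm.trans hf

theorem commutator_augKer_eq_top [MulAction.IsMultiplyPretransitive A X 2]
    (hX : 2 < Fintype.card X) (hA : commutator A = ⊤) :
    commutator (augKer H A X) = ⊤ := by
  refine commutator_eq_top_of_le fun w hw => ?_
  rw [← inl_left_mul_inr_right w] at hw ⊢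
  refine mul_mem (inl_mem_commutator_augKer hX ?_) (inr_mem_commutator_augKer hA _)
  exact (mul_mem_cancel_right (inr_mem_augKer w.right)).1 hw

/-- The embedding `h ↦ (fun _ => h, 1)` of `H` as constant functions. The divisibility hypothesis
puts its image in the kernel of the augmentation. -/
def diagonal (hX : Nat.card (Abelianization H) ∣ Fintype.card X) :
    H →* augKer H A X :=
  ((inl : _ →* PermWreath H A X).comp (Pi.constMonoidHom X H)).codRestrict _ fun h => by
    obtain ⟨k, hk⟩ := hX
    simp [hk, pow_mul]

theorem diagonal_injective [Nonempty X] (hX : Nat.card (Abelianization H) ∣ Fintype.card X) :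
    Function.Injective (diagonal (A := A) hX) := fun _ _ h =>
  Function.const_injective (inl_injective (congrArg Subtype.val h))

end PermWreath

/-! ### The Grigorchuk group -/

namespace Grigorchuk

open Equiv

/-- The permutation of the tree `List α` acting by `h x` on the subtree below each vertex `[x]` of
the first level, which it fixes. -/
def branch {α : Type*} : (α → Perm (List α)) →* Perm (List α) :=
  MonoidHom.toHomPerm
    { toFun := fun h w => match w with
        | [] => []
        | x :: w => x :: h x w
      map_one' := funext fun w => by cases w <;> rfl
      map_mul' := fun _ _ => funext fun w => by cases w <;> rfl }

@[simp]
theorem branch_nil {α : Type*} (h : α → Perm (List α)) : branch h [] = [] :=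
  rfl

@[simp]
theorem branch_cons {α : Type*} (h : α → Perm (List α)) (x : α) (w : List α) :
    branch h (x :: w) = x :: h x w :=
  rfl

/-- The automorphism of the tree `List A` acting on the first level as left translation by `a`. -/
def rooted {A : Type*} [Group A] : A →* Perm (List A) :=
  MonoidHom.toHomPerm
    { toFun := fun a w => match w with
        | [] => []
        | x :: w => (a * x) :: w
      map_one' := funext fun w => by cases w <;> simp [Function.End.one_def]
      map_mul' := fun a b => funext fun w => by
        cases w with
        | nil => rfl
        | cons x w => exact congrArg (· :: w) (mul_assoc a b x) }

@[simp]
theorem rooted_nil {A : Type*} [Group A] (a : A) : rooted a [] = [] :=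
  rfl

@[simp]
theorem rooted_cons {A : Type*} [Group A] (a x : A) (w : List A) :
    rooted a (x :: w) = (a * x) :: w :=
  rfl

theorem rooted_mul_branch_mul_rooted_inv {A : Type*} [Group A] (a : A)
    (h : A → Perm (List A)) :
    rooted a * branch h * (rooted a)⁻¹ = branch fun x => h (a⁻¹ * x) := by
  rw [mul_inv_eq_iff_eq_mul]
  ext1 w
  cases w <;> simp

theorem isOfFinOrder_branch {α : Type*} [Finite α] {h : α → Perm (List α)}
    (hh : ∀ x, IsOfFinOrder (h x)) : IsOfFinOrder (branch h) :=
  branch.isOfFinOrder (isOfFinOrder_pi hh)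

/-- The subgroup `{1, b, c, d}` of the Grigorchuk group, encoded as `b = (-1, -1)`, `c = (-1, 1)`
and `d = (1, -1)`. The first coordinate tells how the element acts on the subtree below `[1]`. -/
abbrev Klein : Type :=
  ℤˣ × ℤˣ

/-- The automorphism `b ↦ c ↦ d ↦ b` of the Klein group. -/
def rotate : Klein →* Klein :=
  (MonoidHom.snd ℤˣ ℤˣ).prod (MonoidHom.fst ℤˣ ℤˣ * MonoidHom.snd ℤˣ ℤˣ)

theorem fst_eq_one_or_fst_rotate_eq_one (v : Klein) :
    v.1 = 1 ∨ (rotate v).1 = 1 ∨ (rotate (rotate v)).1 = 1 := by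
  revert v; decide

theorem rotate_surjective : Function.Surjective rotate := by
  decide

/-- The action of the Klein group on the binary tree `List ℤˣ`, in which `b = (a, c)`,
`c = (a, d)` and `d = (1, b)` where `a` swaps the two subtrees. The first component is the one
below `[1]`. -/
def directedFun : Klein → List ℤˣ → List ℤˣ
  | _, [] => []
  | v, x :: w => x :: if x = 1 then rooted v.1 w else directedFun (rotate v) w

theorem directedFun_one (w : List ℤˣ) : directedFun 1 w = w := by
  induction w with
  | nil => rfl
  | cons x w ih => simp [directedFun, ih]

theorem directedFun_mul (u v : Klein) (w : List ℤˣ) :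
    directedFun (u * v) w = directedFun u (directedFun v w) := by
  induction w generalizing u v with
  | nil => rfl
  | cons x w ih => by_cases hx : x = 1 <;> simp [directedFun, hx, ih]

/-- The homomorphism sending elements of the Klein group to automorphisms of the binary tree. -/
def directed : Klein →* Perm (List ℤˣ) :=
  MonoidHom.toHomPerm
    { toFun := directedFun
      map_one' := funext directedFun_one
      map_mul' := fun u v => funext (directedFun_mul u v) }

/-- The section of `directed v` at the vertex `[x]`, that is, its action on the subtree below. -/
def directedSection (v : Klein) (x : ℤˣ) : Perm (List ℤˣ) :=
  if x = 1 then rooted v.1 else directed (rotate v)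

theorem directed_eq_branch (v : Klein) : directed v = branch (directedSection v) := by
  ext1 w
  cases w with
  | nil => rfl
  | cons x w =>
    change x :: (if x = 1 then rooted v.1 w else directed (rotate v) w) = x :: directedSection v x w
    rw [directedSection]
    split_ifs <;> rfl

/-- The automorphism of the binary tree represented by the letter `(s, v)`, a rooted element
followed on the right by a directed one. -/
def letter (p : ℤˣ × Klein) : Perm (List ℤˣ) :=
  rooted p.1 * directed p.2

theorem letter_inv (p : ℤˣ × Klein) : (letter p)⁻¹ = directed p.2 * rooted p.1 := by
  have hp : p.2⁻¹ = p.2 := Prod.ext (Int.units_inv_eq_self _) (Int.units_inv_eq_self _)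
  rw [letter, mul_inv_rev, ← map_inv, ← map_inv, hp, Int.units_inv_eq_self]

/-- The automorphism of the binary tree represented by a word. -/
def eval (L : List (ℤˣ × Klein)) : Perm (List ℤˣ) :=
  (L.map letter).prod

@[simp]
theorem eval_nil : eval [] = 1 :=
  rfl

@[simp]
theorem eval_cons (p : ℤˣ × Klein) (L : List (ℤˣ × Klein)) : eval (p :: L) = letter p * eval L :=
  List.prod_cons

@[simp]
theorem eval_append (K L : List (ℤˣ × Klein)) : eval (K ++ L) = eval K * eval L := by
  simp [eval]

theorem length_rooted (a : ℤˣ) (w : List ℤˣ) : (rooted a w).length = w.length := by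
  cases w <;> simp

theorem length_directed (v : Klein) (w : List ℤˣ) : (directed v w).length = w.length := by
  induction w generalizing v with
  | nil => rfl
  | cons x w ih =>
    rw [directed_eq_branch, branch_cons, directedSection]
    split_ifs <;> simp [ih, length_rooted]

theorem length_eval (L : List (ℤˣ × Klein)) (w : List ℤˣ) : (eval L w).length = w.length := by
  induction L with
  | nil => rfl
  | cons p L ih => simp [letter, length_rooted, length_directed, ih]

/-- The word `a x₁ a x₂ ⋯ a xₙ`, where `a` is the rooted swap. -/
def alternatingWord (xs : List Klein) : List (ℤˣ × Klein) :=
  xs.map (Prod.mk (-1))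

/-- The word for the section below `[-1]` of the alternating word `a x₁ a x₂ ⋯ a xₙ`, when `n` is
even. For odd `n` the last letter is dropped. -/
def sectionWord : List Klein → List (ℤˣ × Klein)
  | x :: y :: xs => (x.1, rotate y) :: sectionWord xs
  | _ => []

theorem length_sectionWord : ∀ xs : List Klein, (sectionWord xs).length = xs.length / 2
  | [] => rfl
  | [_] => by simp [sectionWord]
  | _ :: _ :: xs => by
    simp only [sectionWord, List.length_cons, length_sectionWord xs]
    lia

theorem sectionWord_append : ∀ {xs : List Klein} (_ : Even xs.length) (ys : List Klein),
    sectionWord (xs ++ ys) = sectionWord xs ++ sectionWord ys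
  | [], _, _ => rfl
  | [_], h, _ => by simp at h
  | x :: y :: xs, h, ys => by
    have hxs : Even xs.length := by simpa [Nat.even_add_one] using h
    simp [sectionWord, sectionWord_append hxs]

theorem letter_mul_letter_eq_branch (x y : Klein) :
    letter (-1, x) * letter (-1, y) =
      branch fun z => if z = 1 then (letter (y.1, rotate x))⁻¹ else letter (x.1, rotate y) := by
  have hinv : (rooted (-1 : ℤˣ))⁻¹ = rooted (-1) := by rw [← map_inv]; rfl
  calc letter (-1, x) * letter (-1, y)
      = rooted (-1) * branch (directedSection x) * (rooted (-1))⁻¹ *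
          branch (directedSection y) := by
        simp only [letter, hinv, directed_eq_branch, mul_assoc]
    _ = branch ((fun z => directedSection x ((-1)⁻¹ * z)) * directedSection y) := by
        rw [rooted_mul_branch_mul_rooted_inv, map_mul]
    _ = _ := by
        congr 1
        funext z
        rcases Int.units_eq_one_or z with rfl | rfl
        · simp [directedSection, letter_inv]
        · simp [directedSection, letter]

theorem eval_alternatingWord_eq_branch : ∀ {xs : List Klein} (_ : Even xs.length),
    eval (alternatingWord xs) = branch fun z =>
      if z = 1 then (eval (sectionWord xs.reverse))⁻¹ else eval (sectionWord xs)
  | [], _ => by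
    suffices h : (fun _ : ℤˣ => (1 : Perm (List ℤˣ))) = 1 by simp [alternatingWord, sectionWord, h]
    rfl
  | [_], h => by simp at h
  | x :: y :: xs, h => by
    have hxs : Even xs.length := by simpa [Nat.even_add_one] using h
    calc eval (alternatingWord (x :: y :: xs))
        = letter (-1, x) * letter (-1, y) * eval (alternatingWord xs) := by
          simp [alternatingWord, mul_assoc]
      _ = _ := by
        rw [letter_mul_letter_eq_branch, eval_alternatingWord_eq_branch hxs, ← map_mul]
        congr 1
        funext z
        by_cases hz : z = 1 <;>
          simp [hz, sectionWord, sectionWord_append, hxs]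

theorem isOfFinOrder_eval_alternatingWord_of_even {xs : List Klein} (hxs : Even xs.length)
    (h : IsOfFinOrder (eval (sectionWord xs)))
    (hrev : IsOfFinOrder (eval (sectionWord xs.reverse))) :
    IsOfFinOrder (eval (alternatingWord xs)) := by
  rw [eval_alternatingWord_eq_branch hxs]
  refine isOfFinOrder_branch fun z => ?_
  split_ifs
  exacts [hrev.inv, h]

/-- A word is reducible if some letter is purely rooted or purely directed, so that up to
conjugation it can be merged with a neighbour. -/
def Reducible (L : List (ℤˣ × Klein)) : Prop :=
  ∃ p ∈ L, p.1 = 1 ∨ p.2 = 1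

theorem isConj_eval_append_comm (K L : List (ℤˣ × Klein)) :
    IsConj (eval (K ++ L)) (eval (L ++ K)) :=
  isConj_iff.2 ⟨(eval K)⁻¹, by simp⟩

theorem isOfFinOrder_letter {p : ℤˣ × Klein} (hp : p.1 = 1 ∨ p.2 = 1) :
    IsOfFinOrder (letter p) := by
  rcases hp with hp | hp
  · simpa [letter, hp] using directed.isOfFinOrder (isOfFinOrder_of_finite p.2)
  · simpa [letter, hp] using rooted.isOfFinOrder (isOfFinOrder_of_finite p.1)

theorem Reducible.isOfFinOrder_eval {L : List (ℤˣ × Klein)} (hL : Reducible L)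
    (ih : ∀ K : List (ℤˣ × Klein), K.length < L.length → IsOfFinOrder (eval K)) :
    IsOfFinOrder (eval L) := by
  obtain ⟨p, hpL, hp⟩ := hL
  obtain ⟨K, M, rfl⟩ := List.append_of_mem hpL
  rcases hp with hp1 | hp2
  · rw [List.append_cons] at ih ⊢
    refine (isConj_eval_append_comm M (K ++ [p])).isOfFinOrder ?_
    rw [← List.append_assoc]
    rcases (M ++ K).eq_nil_or_concat' with hMK | ⟨N, q, hMK⟩
    · simpa [hMK] using isOfFinOrder_letter (.inl hp1)
    have hmerge : eval (N ++ [q] ++ [p]) = eval (N ++ [(q.1, q.2 * p.2)]) := by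
      simp [letter, hp1, mul_assoc]
    rw [hMK, hmerge]
    exact ih _ (by grind [congrArg List.length hMK])
  · refine (isConj_eval_append_comm (p :: M) K).isOfFinOrder ?_
    rw [List.cons_append]
    rcases hMK : M ++ K with _ | ⟨q, N⟩
    · simpa using isOfFinOrder_letter (.inr hp2)
    have hmerge : eval (p :: q :: N) = eval ((p.1 * q.1, q.2) :: N) := by
      simp [letter, hp2, mul_assoc]
    rw [hmerge]
    exact ih _ (by grind [congrArg List.length hMK])

theorem eq_alternatingWord_of_not_reducible {L : List (ℤˣ × Klein)} (hL : ¬Reducible L) :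
    L = alternatingWord (L.map Prod.snd) := by
  rw [alternatingWord, List.map_map]
  refine (List.map_id L).symm.trans (List.map_congr_left fun p hp => Prod.ext ?_ rfl)
  exact Int.units_ne_iff_eq_neg.1 fun h1 => hL ⟨p, hp, .inl h1⟩

theorem exists_fst_mem_sectionWord {x : Klein} {K M : List Klein} (hK : Even K.length)
    (hM : M ≠ []) : ∃ p ∈ sectionWord (K ++ x :: M), p.1 = x.1 := by
  obtain ⟨y, M, rfl⟩ := List.exists_cons_of_ne_nil hM
  exact ⟨(x.1, rotate y), by simp [sectionWord_append hK, sectionWord], rfl⟩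

theorem exists_snd_mem_sectionWord {x : Klein} {K M : List Klein} (hK : Odd K.length) :
    ∃ p ∈ sectionWord (K ++ x :: M), p.2 = rotate x := by
  rcases K.eq_nil_or_concat' with rfl | ⟨K, y, rfl⟩
  · simp at hK
  have hK' : Even K.length := by simpa [Nat.odd_add_one] using hK
  exact ⟨(y.1, rotate x), by simp [sectionWord_append hK', sectionWord], rfl⟩

theorem exists_mem_sectionWord_append_self {x : Klein} {xs : List Klein} (hx : x ∈ xs)
    (hodd : Odd xs.length) :
    (∃ p ∈ sectionWord (xs ++ xs), p.1 = x.1) ∧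
      ∃ p ∈ sectionWord (xs ++ xs), p.2 = rotate x := by
  obtain ⟨K, M, rfl⟩ := List.append_of_mem hx
  have hfirst : (K ++ x :: M) ++ (K ++ x :: M) = K ++ x :: (M ++ (K ++ x :: M)) := by simp
  have hsecond : (K ++ x :: M) ++ (K ++ x :: M) = (K ++ x :: M ++ K) ++ x :: M := by simp
  rcases K.length.even_or_odd with hK | hK
  · refine ⟨hfirst ▸ exists_fst_mem_sectionWord hK (by simp), hsecond ▸ ?_⟩
    exact exists_snd_mem_sectionWord (by rw [List.length_append]; exact hodd.add_even hK)
  · refine ⟨hsecond ▸ exists_fst_mem_sectionWord ?_ ?_, hfirst ▸ exists_snd_mem_sectionWord hK⟩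
    · rw [List.length_append]; exact hodd.add_odd hK
    · rintro rfl
      simp [Nat.odd_add_one, hK] at hodd

/-- The section words of the square have the length of `xs` and contain `rotate x`, so `x` can be
replaced by `rotate x`, until its first coordinate is `1` and a section word is reducible. -/
theorem isOfFinOrder_eval_alternatingWord_of_odd {n : ℕ} (hn : Odd n)
    (ih : ∀ L : List (ℤˣ × Klein), L.length < n → IsOfFinOrder (eval L)) {x : Klein}
    (hx : x.1 ≠ 1 → ∀ ys : List Klein, ys.length = n → rotate x ∈ ys →
      IsOfFinOrder (eval (alternatingWord ys)))
    (xs : List Klein) (hxs : xs.length = n) (hmem : x ∈ xs) :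
    IsOfFinOrder (eval (alternatingWord xs)) := by
  subst hxs
  have key (ys : List Klein) (hys : ys.length = xs.length) (hxys : x ∈ ys) :
      IsOfFinOrder (eval (sectionWord (ys ++ ys))) := by
    have hlen : (sectionWord (ys ++ ys)).length = xs.length := by
      rw [length_sectionWord, List.length_append]
      lia
    obtain ⟨⟨p, hp, hp1⟩, q, hq, hq2⟩ := exists_mem_sectionWord_append_self hxys (hys ▸ hn)
    by_cases hred : Reducible (sectionWord (ys ++ ys))
    · exact hred.isOfFinOrder_eval (hlen ▸ ih)
    rw [eq_alternatingWord_of_not_reducible hred]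
    refine hx (fun h1 => hred ⟨p, hp, .inl (hp1.trans h1)⟩) _ (by simpa using hlen) ?_
    exact hq2 ▸ List.mem_map_of_mem hq
  have hsq : IsOfFinOrder (eval (alternatingWord (xs ++ xs))) := by
    refine isOfFinOrder_eval_alternatingWord_of_even (by simp) (key xs rfl hmem) ?_
    rw [List.reverse_append]
    exact key xs.reverse (by simp) (by simpa using hmem)
  rw [alternatingWord, List.map_append, eval_append, ← sq] at hsq
  exact hsq.of_pow two_ne_zero

theorem isOfFinOrder_eval (L : List (ℤˣ × Klein)) : IsOfFinOrder (eval L) := by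
  induction hn : L.length using Nat.strong_induction_on generalizing L with
  | h n ih =>
    replace ih (K : List (ℤˣ × Klein)) (hK : K.length < n) : IsOfFinOrder (eval K) :=
      ih K.length hK K rfl
    by_cases hred : Reducible L
    · exact hred.isOfFinOrder_eval (hn ▸ ih)
    rcases L.eq_nil_or_concat' with rfl | ⟨K, p, hL⟩
    · exact IsOfFinOrder.one
    set xs := L.map Prod.snd
    have hxs : xs.length = n := by simpa [xs] using hn
    rw [eq_alternatingWord_of_not_reducible hred]
    rcases n.even_or_odd with heven | hodd
    · have hsection (ys : List Klein) (hys : ys.length = n) :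
          IsOfFinOrder (eval (sectionWord ys)) :=
        ih _ <| by
          rw [length_sectionWord, hys]
          exact Nat.div_lt_self (by simp [← hn, hL]) one_lt_two
      exact isOfFinOrder_eval_alternatingWord_of_even (hxs ▸ heven) (hsection xs hxs)
        (hsection xs.reverse (by simpa using hxs))
    · have hmem : p.2 ∈ xs := by simp [xs, hL]
      exact isOfFinOrder_eval_alternatingWord_of_odd hodd ih (fun h₀ =>
        isOfFinOrder_eval_alternatingWord_of_odd hodd ih fun h₁ =>
        isOfFinOrder_eval_alternatingWord_of_odd hodd ih fun h₂ => by
          simpa [h₀, h₁, h₂] using fst_eq_one_or_fst_rotate_eq_one p.2) xs hxs hmem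

theorem exists_sectionWord_eq : ∀ L : List (ℤˣ × Klein),
    ∃ xs : List Klein, Even xs.length ∧ sectionWord xs = L
  | [] => ⟨[], by simp [sectionWord]⟩
  | (a, v) :: L => by
    obtain ⟨xs, hxs, rfl⟩ := exists_sectionWord_eq L
    obtain ⟨y, rfl⟩ := rotate_surjective v
    exact ⟨(a, 1) :: y :: xs, by simpa [Nat.even_add_one] using hxs, rfl⟩

end Grigorchuk

open Grigorchuk

/-- The first Grigorchuk group, as a group of permutations of the binary tree `List ℤˣ`. -/
def grigorchukGroup : Subgroup (Equiv.Perm (List ℤˣ)) :=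
  rooted.range ⊔ directed.range

namespace grigorchukGroup

theorem rooted_mem (a : ℤˣ) : rooted a ∈ grigorchukGroup :=
  Subgroup.mem_sup_left ⟨a, rfl⟩

theorem eval_mem (L : List (ℤˣ × Klein)) : eval L ∈ grigorchukGroup :=
  list_prod_mem fun _ hg => by
    obtain ⟨p, -, rfl⟩ := List.mem_map.1 hg
    exact mul_mem (rooted_mem p.1) (Subgroup.mem_sup_right ⟨p.2, rfl⟩)

theorem exists_eval_eq {g : Equiv.Perm (List ℤˣ)} (hg : g ∈ grigorchukGroup) :
    ∃ L, eval L = g := by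
  rw [grigorchukGroup, Subgroup.sup_eq_closure] at hg
  have hgen (g : Equiv.Perm (List ℤˣ)) (hg : g ∈ rooted.range ∨ g ∈ directed.range) :
      ∃ L, eval L = g := by
    rcases hg with ⟨a, rfl⟩ | ⟨v, rfl⟩
    · exact ⟨[(a, 1)], by simp [letter]⟩
    · exact ⟨[(1, v)], by simp [letter]⟩
  induction hg using Subgroup.closure_induction'' with
  | mem g hg => exact hgen g hg
  | inv_mem g hg => exact hgen _ (hg.imp inv_mem inv_mem)
  | one => exact ⟨[], rfl⟩
  | mul g h _ _ ihg ihh =>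
    obtain ⟨K, rfl⟩ := ihg
    obtain ⟨L, rfl⟩ := ihh
    exact ⟨K ++ L, eval_append K L⟩

theorem fg : Group.FG grigorchukGroup :=
  (Group.fg_iff_subgroup_fg _).2 <| Subgroup.FG.sup
    ((Group.fg_iff_subgroup_fg _).1 (Group.fg_range _))
    ((Group.fg_iff_subgroup_fg _).1 (Group.fg_range _))

theorem isMulTorsion : IsMulTorsion grigorchukGroup := fun g => by
  obtain ⟨L, hL⟩ := exists_eval_eq g.2
  exact Submonoid.isOfFinOrder_coe.1 (hL ▸ isOfFinOrder_eval L)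

theorem residuallyFinite : Group.ResiduallyFinite grigorchukGroup := by
  refine residuallyFinite_of_finite_orbits (X := List ℤˣ) fun w => ?_
  refine (List.finite_length_eq ℤˣ w.length).subset ?_
  rintro _ ⟨g, rfl⟩
  obtain ⟨L, hL⟩ := exists_eval_eq g.2
  exact (congrArg (fun g : Equiv.Perm (List ℤˣ) => (g w).length) hL.symm).trans (length_eval L w)

theorem exists_apply_neg_one_cons (g : grigorchukGroup) :
    ∃ g' : grigorchukGroup, ∀ w, g'.1 (-1 :: w) = -1 :: g.1 w := by
  obtain ⟨L, hL⟩ := exists_eval_eq g.2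
  obtain ⟨xs, hxs, rfl⟩ := exists_sectionWord_eq L
  refine ⟨⟨_, eval_mem (alternatingWord xs)⟩, fun w => ?_⟩
  simp [eval_alternatingWord_eq_branch hxs, ← hL]

theorem infinite : Infinite grigorchukGroup := by
  choose lift hlift using exists_apply_neg_one_cons
  have hinj : Function.Injective lift := fun g h hgh => by
    refine Subtype.ext (Equiv.ext fun w => List.cons_injective (a := -1) ?_)
    rw [← hlift, ← hlift, hgh]
  refine not_finite_iff_infinite.1 fun _ => ?_
  obtain ⟨g, hg⟩ := Finite.surjective_of_injective hinj ⟨rooted (-1), rooted_mem (-1)⟩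
  simpa [hg] using hlift g []

end grigorchukGroup

theorem exists_injective_to_fg_perfect_torsion {H : Type u} [Group H] [Group.FG H]
    [Group.ResiduallyFinite H] (hH : IsMulTorsion H) :
    ∃ (Γ : Type u) (_ : Group Γ) (φ : H →* Γ), Function.Injective φ ∧ Group.FG Γ ∧
      commutator Γ = ⊤ ∧ Group.ResiduallyFinite Γ ∧ IsMulTorsion Γ := by
  have : Finite (Abelianization H) := finite_abelianization_of_fg_of_isMulTorsion hH
  let n := 5 * Nat.card (Abelianization H)
  have hn : 5 ≤ n := Nat.le_mul_of_pos_right 5 Nat.card_pos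
  have : NeZero n := ⟨by lia⟩
  have : MulAction.IsMultiplyPretransitive (alternatingGroup (Fin n)) (Fin n) 2 :=
    have := alternatingGroup.isMultiplyPretransitive (Fin n)
    MulAction.isMultiplyPretransitive_of_le (n := Nat.card (Fin n) - 2) (by simp; lia) (by simp)
  have := PermWreath.residuallyFinite (H := H) (A := alternatingGroup (Fin n)) (X := Fin n)
  refine ⟨PermWreath.augKer H (alternatingGroup (Fin n)) (Fin n), inferInstance,
    PermWreath.diagonal (by simp [n]), PermWreath.diagonal_injective _, PermWreath.fg_augKer,
    PermWreath.commutator_augKer_eq_top (by simp; lia)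
      (commutator_alternatingGroup_eq_top (by simpa using hn)), inferInstance,
    (PermWreath.isMulTorsion hH isMulTorsion_of_finite).subgroup _⟩

/-- Every finitely generated, residually finite torsion group embeds into a finitely
generated, perfect, infinite, residually finite torsion group. -/
theorem embeds_into_fg_perfect_torsion_group {G : Type u} [Group G]
    (hfg : Group.FG G) (hrf : ResiduallyFinite G) (htors : Monoid.IsTorsion G) :
    ∃ (Γ : Type u) (_ : Group Γ) (φ : G →* Γ),
      Function.Injective φ ∧
      Group.FG Γ ∧
      commutator Γ = ⊤ ∧
      Infinite Γ ∧
      ResiduallyFinite Γ ∧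
      Monoid.IsTorsion Γ := by
  have := residuallyFinite_iff_group_residuallyFinite.1 hrf
  have := grigorchukGroup.fg
  have := grigorchukGroup.infinite
  have := grigorchukGroup.residuallyFinite
  have hH : IsMulTorsion (G × grigorchukGroup) := fun ⟨g, k⟩ =>
    (htors g).prod_mk (grigorchukGroup.isMulTorsion k)
  obtain ⟨Γ, _, φ, hφ, hΓfg, hΓperfect, hΓrf, hΓtors⟩ := exists_injective_to_fg_perfect_torsion hH
  exact ⟨Γ, _, φ.comp (MonoidHom.inl G grigorchukGroup),
    hφ.comp (Prod.mk_left_injective 1), hΓfg, hΓperfect, .of_injective φ hφ,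
    residuallyFinite_iff_group_residuallyFinite.2 hΓrf, hΓtors⟩
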